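/- Let X be a one-dimensional Peano continuum and Y a subcontinuum containing the core of X. The first point map r : X → Y (defined as r(x) = x for x ∈ Y, and for x ∉ Y as the unique point of Y through which every arc from x to Y passes) is a continuous retraction of X onto Y. -/

import Mathlib

open Set

/-- Covering dimension at most `n`. -/
def CovDimLE (X : Type*) [TopologicalSpace X] (n : ℕ) : Prop :=
  ∀ U : Set (Set X), U.Finite → (∀ u ∈ U, IsOpen u) → ⋃₀ U = Set.univ →
    ∃ V : Set (Set X), V.Finite ∧ (∀ v ∈ V, IsOpen v) ∧ ⋃₀ V = Set.univ ∧
      (∀ v ∈ V, ∃ u ∈ U, v ⊆ u) ∧ ∀ x : X, {v ∈ V | x ∈ v}.ncard ≤ n + 1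

/-- A path is reduced if it is constant or admits no nullhomotopic subloop. -/
def IsReducedPath {X : Type*} [TopologicalSpace X] {a b : X} (α : Path a b) : Prop :=
  (∀ t, α t = a) ∨
    ¬ ∃ (s t : ℝ) (hst : s < t) (_ : 0 ≤ s) (_ : t ≤ 1) (h : α.extend s = α.extend t),
      Path.Homotopic
        ((α.truncate s t).cast (by rw [min_eq_left hst.le]; exact h.symm) rfl)
        (Path.refl (α.extend t))

/-- The union of the images of all essential reduced loops. -/
def HomotopyCore (X : Type*) [TopologicalSpace X] : Set X :=
  ⋃ (x : X) (γ : Path x x) (_ : ¬ γ.Homotopic (Path.refl x) ∧ IsReducedPath γ),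
    Set.range fun t => γ t

/-!
A simple loop `γ` in a space of dimension at most one is essential and reduced: by Tietze's theorem
its standard parametrization of the unit circle extends to a bounded map from the space to `ℂ`, and
since the dimension is at most one this map can be perturbed off zero, so `γ` has winding number
one. Hence every simple loop lies in the core, and so in `Y`.

If a component `W` of the complement of `Y` had two boundary points in `Y`, then an arc inside `W`
from near one to near the other, together with an arc joining the same end points close to `Y`,
would contain a simple loop not contained in `Y`. So `W` has exactly one boundary point, and
sending all of `W` to it is the first point map; it is continuous because every connected set that
joins a point of `W` to `Y` contains that boundary point.

The arcs exist because a complete, locally connected metric space is locally path connected, and a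
path with distinct end points contains an arc: flatten a maximal family of disjoint loops of the
path, which leaves a path with interval fibers, and reparametrize.
-/

section LocalPathConnectedness

open Filter Topology

lemma reflTransGen_eventually_exists_chain {α : Type*} {r : α → α → Prop}
    (hr : ∀ a, r a a) {a b : α} (h : Relation.ReflTransGen r a b) :
    ∀ᶠ N : ℕ in atTop, ∃ c : ℕ → α, c 0 = a ∧ c N = b ∧ ∀ i, r (c i) (c (i + 1)) := by
  induction h using Relation.ReflTransGen.head_induction_on with
  | refl => exact .of_forall fun N => ⟨fun _ => b, rfl, rfl, fun _ => hr b⟩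
  | @head a a' haa' _ ih =>
    rw [← Filter.map_add_atTop_eq_nat 1, Filter.eventually_map]
    filter_upwards [ih] with N ⟨c, hc0, hcN, hc⟩
    refine ⟨fun n => n.casesOn a c, rfl, hcN, fun i => ?_⟩
    cases i with
    | zero =>
      change r a (c 0)
      rwa [hc0]
    | succ i => exact hc i

variable {X : Type*} [MetricSpace X]

/-- The points `x` and `y` are joined by a connected open set whose points are pairwise at distance
at most `ε`: the relation between consecutive points of the chains approximating a path. -/
def ConnectedWithin (ε : ℝ) (x y : X) : Prop :=
  ∃ u, IsOpen u ∧ IsPreconnected u ∧ x ∈ u ∧ y ∈ u ∧ ∀ a ∈ u, ∀ b ∈ u, dist a b ≤ ε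

lemma ConnectedWithin.dist_le {ε : ℝ} {x y : X} : ConnectedWithin ε x y → dist x y ≤ ε :=
  fun ⟨_, _, _, hx, hy, hu⟩ => hu _ hx _ hy

lemma ConnectedWithin.symm {ε : ℝ} {x y : X} : ConnectedWithin ε x y → ConnectedWithin ε y x :=
  fun ⟨u, ho, hc, hx, hy, hu⟩ => ⟨u, ho, hc, hy, hx, hu⟩

lemma eventually_connectedWithin [LocallyConnectedSpace X] {ε : ℝ} (hε : 0 < ε) (x : X) :
    ∀ᶠ y in 𝓝 x, ConnectedWithin ε x y := by
  obtain ⟨u, hu, ho, hx, hc⟩ := locallyConnectedSpace_iff_subsets_isOpen_isConnected.1 ‹_› x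
    (Metric.ball x (ε / 2)) (Metric.ball_mem_nhds x (half_pos hε))
  filter_upwards [ho.mem_nhds hx] with y hy
  refine ⟨u, ho, hc.isPreconnected, hx, hy, fun a ha b hb => ?_⟩
  have hax := Metric.mem_ball.1 (hu ha)
  have hbx := Metric.mem_ball.1 (hu hb)
  linarith [dist_triangle_right a b x]

lemma ConnectedWithin.eventually_exists_chain [LocallyConnectedSpace X] {ε ε' : ℝ} {x y : X}
    (hxy : ConnectedWithin ε x y) (hε' : 0 < ε') :
    ∀ᶠ N : ℕ in atTop, ∃ c : ℕ → X, c 0 = x ∧ c N = y ∧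
      (∀ i, ConnectedWithin ε' (c i) (c (i + 1))) ∧ ∀ i, dist x (c i) ≤ ε := by
  obtain ⟨u, -, hu, hx, hy, hdiam⟩ := hxy
  have := isPreconnected_iff_preconnectedSpace.1 hu
  have hchain : Relation.ReflTransGen (fun a b : u => ConnectedWithin ε' (a : X) b)
      ⟨x, hx⟩ ⟨y, hy⟩ := by
    refine PreconnectedSpace.induction₂' _ (fun a => ?_) ⟨fun _ _ _ => .trans⟩ _ _
    filter_upwards [continuous_subtype_val.continuousAt.eventually
      (eventually_connectedWithin hε' (a : X))] with b hab
    exact ⟨.single hab, .single hab.symm⟩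
  have hrefl (a : u) : ConnectedWithin ε' (a : X) a :=
    (eventually_connectedWithin hε' _).self_of_nhds
  filter_upwards [reflTransGen_eventually_exists_chain hrefl hchain] with N ⟨c, h0, hN, hc⟩
  exact ⟨fun i => c i, congrArg _ h0, congrArg _ hN, hc, fun i => hdiam _ hx _ (c i).2⟩

/-- The sequence `γ'` refines `γ`: between two consecutive terms of `γ` it inserts `N - 1` further
terms, each at distance at most `ε` from the term of `γ` preceding it. -/
structure IsRefinement (ε : ℝ) (N : ℕ) (γ γ' : ℕ → X) : Prop where
  pos : 0 < N
  apply_mul : ∀ i, γ' (N * i) = γ i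
  dist_le : ∀ i, dist (γ (i / N)) (γ' i) ≤ ε

/-- A sequence with finitely many values whose consecutive terms are connected within `ε`. -/
structure IsFineSeq (ε : ℝ) (γ : ℕ → X) : Prop where
  finite_range : (range γ).Finite
  connectedWithin : ∀ i, ConnectedWithin ε (γ i) (γ (i + 1))

lemma IsFineSeq.exists_isRefinement [LocallyConnectedSpace X] {ε ε' : ℝ} {γ : ℕ → X}
    (hγ : IsFineSeq ε γ) (hε' : 0 < ε') :
    ∃ γ' N, IsFineSeq ε' γ' ∧ IsRefinement ε N γ γ' := by
  have : Nonempty X := ⟨γ 0⟩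
  have hchains : ∀ᶠ N : ℕ in atTop, ∀ p ∈ range γ ×ˢ range γ, ConnectedWithin ε p.1 p.2 →
      ∃ c : ℕ → X, c 0 = p.1 ∧ c N = p.2 ∧
        (∀ i, ConnectedWithin ε' (c i) (c (i + 1))) ∧ ∀ i, dist p.1 (c i) ≤ ε := by
    refine (eventually_all_finite (hγ.finite_range.prod hγ.finite_range)).2 fun p _ => ?_
    by_cases hp : ConnectedWithin ε p.1 p.2
    · simpa only [hp, true_imp_iff] using hp.eventually_exists_chain hε'
    · simp only [hp, false_imp_iff, eventually_true]
  obtain ⟨N, hN, hpos⟩ := (hchains.and (eventually_gt_atTop 0)).exists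
  choose! c hc0 hcN hc hcdist using hN
  have hmem (i : ℕ) : (γ i, γ (i + 1)) ∈ range γ ×ˢ range γ := ⟨⟨i, rfl⟩, ⟨i + 1, rfl⟩⟩
  refine ⟨fun i => c (γ (i / N), γ (i / N + 1)) (i % N), N, ⟨?_, fun i => ?_⟩,
    hpos, fun i => ?_, fun i => hcdist _ (hmem _) (hγ.connectedWithin _) _⟩
  · refine (((hγ.finite_range.prod hγ.finite_range).prod (finite_Iio N)).image
      fun q => c q.1 q.2).subset ?_
    rintro _ ⟨i, rfl⟩
    exact ⟨((γ (i / N), γ (i / N + 1)), i % N), ⟨hmem _, Nat.mod_lt _ hpos⟩, rfl⟩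
  · obtain ⟨q, k, hk, rfl⟩ : ∃ q k, k < N ∧ i = N * q + k :=
      ⟨i / N, i % N, Nat.mod_lt _ hpos, (Nat.div_add_mod i N).symm⟩
    have hlink := hc _ (hmem q) (hγ.connectedWithin q) k
    have hdiv : (N * q + k) / N = q := by rw [Nat.mul_add_div hpos, Nat.div_eq_of_lt hk, add_zero]
    simp only [hdiv, Nat.mul_add_mod, Nat.mod_eq_of_lt hk]
    rcases (show k + 1 ≤ N from hk).lt_or_eq with hlt | heq
    · rwa [add_assoc, Nat.mul_add_div hpos, Nat.div_eq_of_lt hlt, Nat.mul_add_mod,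
        Nat.mod_eq_of_lt hlt]
    · have hnext : N * q + k + 1 = N * (q + 1) := by rw [add_assoc, heq, mul_add_one]
      rw [hnext, Nat.mul_div_cancel_left _ hpos, Nat.mul_mod_right,
        hc0 _ (hmem (q + 1)) (hγ.connectedWithin _)]
      rwa [heq, hcN _ (hmem q) (hγ.connectedWithin q)] at hlink
  · simp only [Nat.mul_div_cancel_left _ hpos, Nat.mul_mod_right]
    exact hc0 _ (hmem i) (hγ.connectedWithin i)

lemma dist_apply_nat_floor_le {γ : ℕ → X} {ε : ℝ}
    (hγ : ∀ i, dist (γ i) (γ (i + 1)) ≤ ε) {s t : ℝ} (hst : |s - t| ≤ 1) :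
    dist (γ ⌊s⌋₊) (γ ⌊t⌋₊) ≤ ε := by
  wlog hle : s ≤ t generalizing s t
  · rw [dist_comm]
    exact this (by rwa [abs_sub_comm]) (le_of_not_ge hle)
  have hfloor : ⌊s⌋₊ ≤ ⌊t⌋₊ := Nat.floor_le_floor hle
  have hfloor' : ⌊t⌋₊ ≤ ⌊s⌋₊ + 1 := by
    rw [← Nat.lt_add_one_iff]
    refine Nat.floor_lt' (by simp) |>.2 ?_
    have := Nat.lt_floor_add_one s
    push_cast
    linarith [(abs_le.1 hst).1]
  rcases hfloor.eq_or_lt with h | h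
  · exact h ▸ (dist_self _).trans_le (dist_nonneg.trans (hγ 0))
  · rw [show ⌊t⌋₊ = ⌊s⌋₊ + 1 by omega]
    exact hγ _

lemma IsRefinement.dist_nat_floor_le {γ γ' : ℕ → X} {ε : ℝ} {N : ℕ} (h : IsRefinement ε N γ γ')
    (t : ℝ) : dist (γ ⌊t⌋₊) (γ' ⌊N * t⌋₊) ≤ ε := by
  have hfloor := Nat.floor_div_natCast ((N : ℝ) * t) N
  rw [mul_div_cancel_left₀ _ (Nat.cast_ne_zero.2 h.pos.ne')] at hfloor
  exact hfloor ▸ h.dist_le _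

lemma exists_continuousMap_of_isRefinement [CompleteSpace X] {δ : ℝ} {γ : ℕ → ℕ → X} {N : ℕ → ℕ}
    (hγ : ∀ n, IsFineSeq (δ / 2 / 2 ^ n) (γ n))
    (hN : ∀ n, IsRefinement (δ / 2 / 2 ^ n) (N n) (γ n) (γ (n + 1))) :
    ∃ f : C(ℝ, X), (∀ k : ℕ, f k = γ 0 k) ∧ ∀ t, dist (γ 0 ⌊t⌋₊) (f t) ≤ δ := by
  let M (n : ℕ) : ℕ := ∏ i ∈ Finset.range n, N i
  have hM (n : ℕ) : 0 < M n := Finset.prod_pos fun i _ => (hN i).pos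
  have hMsucc (n : ℕ) : M (n + 1) = N n * M n := Finset.prod_range_succ_comm N n
  have hδ (n : ℕ) : 0 ≤ δ / 2 / 2 ^ n := dist_nonneg.trans ((hN n).dist_le 0)
  let F (n : ℕ) (t : ℝ) : X := γ n ⌊M n * t⌋₊
  have hF (t : ℝ) (n : ℕ) : dist (F n t) (F (n + 1) t) ≤ δ / 2 / 2 ^ n := by
    have h := (hN n).dist_nat_floor_le (M n * t)
    rwa [← mul_assoc, ← Nat.cast_mul, ← hMsucc] at h
  choose f hf using fun t => cauchySeq_tendsto_of_complete (cauchySeq_of_le_geometric_two (hF t))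
  have hfF (t : ℝ) (n : ℕ) : dist (F n t) (f t) ≤ δ / 2 ^ n :=
    dist_le_of_le_geometric_two_of_tendsto (hF t) (hf t) n
  have hcont : Continuous f := by
    refine Metric.continuous_iff.2 fun t ε hε => ?_
    obtain ⟨n, hn⟩ : ∃ n : ℕ, 3 * δ / 2 ^ n < ε :=
      ((tendsto_const_nhds.div_atTop (tendsto_pow_atTop_atTop_of_one_lt one_lt_two)).eventually
        (gt_mem_nhds hε)).exists
    have hMn : (0 : ℝ) < M n := Nat.cast_pos.2 (hM n)
    refine ⟨1 / M n, by positivity, fun s hs => ?_⟩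
    have hst : dist (F n s) (F n t) ≤ δ / 2 / 2 ^ n := by
      refine dist_apply_nat_floor_le (fun i => ((hγ n).connectedWithin i).dist_le) ?_
      rw [← mul_sub, abs_mul, abs_of_pos hMn, ← Real.dist_eq]
      exact ((lt_div_iff₀' hMn).1 hs).le
    have hsum : 3 * δ / 2 ^ n = 2 * (δ / 2 ^ n) + 2 * (δ / 2 / 2 ^ n) := by ring
    have htri := dist_triangle4 (f s) (F n s) (F n t) (f t)
    linarith [hfF s n, hfF t n, hδ n, dist_comm (f s) (F n s)]
  refine ⟨⟨f, hcont⟩, fun k => ?_, fun t => by simpa [F, M] using hfF t 0⟩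
  have hFk (n : ℕ) : F n k = γ 0 k := by
    induction n with
    | zero => simp [F, M]
    | succ n ih =>
      rw [← ih]
      simp only [F, ← Nat.cast_mul, Nat.floor_natCast, hMsucc, mul_assoc, (hN n).apply_mul]
  exact tendsto_nhds_unique (hf k) (by simp only [hFk, tendsto_const_nhds])

lemma ConnectedWithin.exists_continuousMap [CompleteSpace X] [LocallyConnectedSpace X] {δ : ℝ}
    (hδ : 0 < δ) {x y : X} (hxy : ConnectedWithin (δ / 2) x y) :
    ∃ f : C(ℝ, X), f 0 = x ∧ f 1 = y ∧ ∀ t ∈ Icc (0 : ℝ) 1, dist x (f t) ≤ δ := by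
  let S (n : ℕ) := {γ : ℕ → X // IsFineSeq (δ / 2 / 2 ^ n) γ}
  have hnext (n : ℕ) (γ : S n) : ∃ γ' : S (n + 1), ∃ N, IsRefinement (δ / 2 / 2 ^ n) N γ.1 γ'.1 :=
    have ⟨γ', N, hγ', hN⟩ := γ.2.exists_isRefinement (ε' := δ / 2 / 2 ^ (n + 1)) (by positivity)
    ⟨⟨γ', hγ'⟩, N, hN⟩
  choose next N hN using hnext
  let start (i : ℕ) : X := i.casesOn x fun _ => y
  have hstart : IsFineSeq (δ / 2 / 2 ^ 0) start := by
    obtain ⟨u, ho, hc, hx, hy, hu⟩ := hxy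
    rw [pow_zero, div_one]
    refine ⟨(toFinite {x, y}).subset ?_, fun i => ⟨u, ho, hc, ?_, hy, hu⟩⟩
    · rintro _ ⟨_ | i, rfl⟩
      exacts [.inl rfl, .inr rfl]
    · cases i
      exacts [hx, hy]
  let γ (n : ℕ) : S n := Nat.rec ⟨start, hstart⟩ next n
  obtain ⟨f, hf, hdist⟩ := exists_continuousMap_of_isRefinement (fun n => (γ n).2)
    (fun n => hN n (γ n))
  have hf0 : f 0 = x := by exact_mod_cast hf 0
  have hf1 : f 1 = y := by exact_mod_cast hf 1
  refine ⟨f, hf0, hf1, fun t ht => ?_⟩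
  rcases ht.2.eq_or_lt with rfl | ht1
  · exact hf1 ▸ hxy.dist_le.trans (by linarith)
  · have hxt := hdist t
    rw [Nat.floor_eq_zero.2 ht1] at hxt
    exact hxt

/-- Mazurkiewicz's theorem. -/
theorem locallyPathConnectedSpace_of_completeSpace [CompleteSpace X] [LocallyConnectedSpace X] :
    LocallyPathConnectedSpace X := by
  refine locallyPathConnectedSpace_iff_pathComponentIn_mem_nhds.2 fun x u hu hx => ?_
  obtain ⟨ε, hε, hball⟩ := Metric.mem_nhds_iff.1 (hu.mem_nhds hx)
  filter_upwards [eventually_connectedWithin (by positivity : 0 < ε / 2 / 2) x] with y hy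
  obtain ⟨f, h0, h1, hdist⟩ := hy.exists_continuousMap (half_pos hε)
  refine JoinedIn.ofLine f.continuous.continuousOn h0 h1 ?_
  rintro _ ⟨t, ht, rfl⟩
  refine hball (Metric.mem_ball'.2 ?_)
  linarith [hdist t ht]

end LocalPathConnectedness

section LoopErasure

open Topology

variable {α X : Type*} [LinearOrder α] {f : α → X} {K : Set α}

lemma apply_eq_of_disjoint_Ioo (hK : ∀ u ∈ K, ∀ v ∈ K, f u = f v → Disjoint K (Ioo u v))
    {t u v u' v' : α} (hu : u ∈ K) (hv : v ∈ K) (huv : f u = f v) (ht : t ∈ Icc u v)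
    (hu' : u' ∈ K) (hv' : v' ∈ K) (huv' : f u' = f v') (ht' : t ∈ Icc u' v') : f u = f u' := by
  have hI {w : α} (hw : w ∈ K) : w ≤ u ∨ v ≤ w := by
    have := (hK u hu v hv huv).notMem_of_mem_left hw
    rwa [mem_Ioo, not_and_or, not_lt, not_lt] at this
  have hI' {w : α} (hw : w ∈ K) : w ≤ u' ∨ v' ≤ w := by
    have := (hK u' hu' v' hv' huv').notMem_of_mem_left hw
    rwa [mem_Ioo, not_and_or, not_lt, not_lt] at this
  rcases hI hu' with h₁ | h₁
  · rcases hI' hu with h₂ | h₂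
    · rw [h₁.antisymm h₂]
    · rw [(ht.1.trans ht'.2).antisymm h₂, huv']
  · rw [huv, (ht'.1.trans ht.2).antisymm h₁]

variable [TopologicalSpace α] [BoundedOrder α]

/-- `K` is left of the domain of `f` after cutting out some open intervals at whose ends `f` takes
the same value: between any two points of `K`, every point is covered by such an interval with ends
in `K`. The interval may be a single point of `K`. -/
structure IsLoopErasure (f : α → X) (K : Set α) : Prop where
  isClosed : IsClosed K
  bot_mem : ⊥ ∈ K
  top_mem : ⊤ ∈ K
  exists_eq : ∀ a ∈ K, ∀ b ∈ K, ∀ m ∈ Icc a b, ∃ u ∈ K ∩ Icc a m, ∃ v ∈ K ∩ Icc m b, f u = f v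

lemma isLoopErasure_univ (f : α → X) : IsLoopErasure f univ :=
  ⟨isClosed_univ, mem_univ _, mem_univ _, fun _ _ _ _ m hm =>
    ⟨m, ⟨mem_univ _, hm.1, le_rfl⟩, m, ⟨mem_univ _, le_rfl, hm.2⟩, rfl⟩⟩

variable [OrderTopology α]

lemma IsLoopErasure.diff_Ioo (hK : IsLoopErasure f K) {u v : α} (hu : u ∈ K) (hv : v ∈ K)
    (huv : f u = f v) : IsLoopErasure f (K \ Ioo u v) := by
  refine ⟨hK.isClosed.sdiff isOpen_Ioo, ⟨hK.bot_mem, fun h => not_lt_bot h.1⟩,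
    ⟨hK.top_mem, fun h => not_top_lt h.2⟩, fun a ha b hb m hm => ?_⟩
  rcases le_or_gt m u with hmu | hum
  · obtain ⟨p, hp, q, hq, hpq⟩ := hK.exists_eq a ha.1 (min b u)
      (by rcases min_choice b u with h | h <;> rw [h]; exacts [hb.1, hu]) m
      ⟨hm.1, le_min hm.2 hmu⟩
    exact ⟨p, ⟨⟨hp.1, fun h => h.1.not_ge (hp.2.2.trans hmu)⟩, hp.2⟩, q,
      ⟨⟨hq.1, fun h => h.1.not_ge (hq.2.2.trans (min_le_right _ _))⟩,
        hq.2.1, hq.2.2.trans (min_le_left _ _)⟩, hpq⟩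
  rcases le_or_gt v m with hvm | hmv
  · obtain ⟨p, hp, q, hq, hpq⟩ := hK.exists_eq (max a v)
      (by rcases max_choice a v with h | h <;> rw [h]; exacts [ha.1, hv]) b hb.1 m
      ⟨max_le hm.1 hvm, hm.2⟩
    exact ⟨p, ⟨⟨hp.1, fun h => h.2.not_ge ((le_max_right _ _).trans hp.2.1)⟩,
      (le_max_left _ _).trans hp.2.1, hp.2.2⟩, q,
      ⟨⟨hq.1, fun h => h.2.not_ge (hvm.trans hq.2.1)⟩, hq.2⟩, hpq⟩
  · have hau : a ≤ u := not_lt.1 fun h => ha.2 ⟨h, hm.1.trans_lt hmv⟩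
    have hvb : v ≤ b := not_lt.1 fun h => hb.2 ⟨hum.trans_le hm.2, h⟩
    exact ⟨u, ⟨⟨hu, fun h => lt_irrefl _ h.1⟩, hau, hum.le⟩, v,
      ⟨⟨hv, fun h => lt_irrefl _ h.2⟩, hmv.le, hvb⟩, huv⟩

variable [TopologicalSpace X] [T2Space X] [CompactSpace α]

lemma IsLoopErasure.sInter (hf : Continuous f) {𝒦 : Set (Set α)}
    (h𝒦 : ∀ K ∈ 𝒦, IsLoopErasure f K) (hchain : IsChain (· ⊆ ·) 𝒦) (hne : 𝒦.Nonempty) :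
    IsLoopErasure f (⋂₀ 𝒦) := by
  refine ⟨isClosed_sInter fun K hK => (h𝒦 K hK).isClosed, fun K hK => (h𝒦 K hK).bot_mem,
    fun K hK => (h𝒦 K hK).top_mem, fun a ha b hb m hm => ?_⟩
  let S (K : 𝒦) : Set (α × α) := (K.1 ∩ Icc a m) ×ˢ (K.1 ∩ Icc m b) ∩ {p | f p.1 = f p.2}
  have hS_closed (K : 𝒦) : IsClosed (S K) :=
    have hK := (h𝒦 K K.2).isClosed
    ((hK.inter isClosed_Icc).prod (hK.inter isClosed_Icc)).inter
      (isClosed_eq (hf.comp continuous_fst) (hf.comp continuous_snd))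
  have hS_nonempty (K : 𝒦) : (S K).Nonempty :=
    have ⟨u, hu, v, hv, huv⟩ := (h𝒦 K K.2).exists_eq a (ha K K.2) b (hb K K.2) m hm
    ⟨(u, v), ⟨hu, hv⟩, huv⟩
  have hS_mono {K L : 𝒦} (h : K.1 ⊆ L) : S K ⊆ S L := fun p hp =>
    ⟨⟨⟨h hp.1.1.1, hp.1.1.2⟩, h hp.1.2.1, hp.1.2.2⟩, hp.2⟩
  have : Nonempty 𝒦 := hne.to_subtype
  obtain ⟨⟨u, v⟩, huv⟩ := IsCompact.nonempty_iInter_of_directed_nonempty_isCompact_isClosed S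
    (fun K L => (hchain.total K.2 L.2).elim (fun h => ⟨K, subset_rfl, hS_mono h⟩)
      fun h => ⟨L, hS_mono h, subset_rfl⟩)
    hS_nonempty (fun K => (hS_closed K).isCompact) hS_closed
  have huv' := mem_iInter.1 huv
  have K₀ : 𝒦 := this.some
  exact ⟨u, ⟨fun K hK => (huv' ⟨K, hK⟩).1.1.1, (huv' K₀).1.1.2⟩,
    v, ⟨fun K hK => (huv' ⟨K, hK⟩).1.2.1, (huv' K₀).1.2.2⟩, (huv' K₀).2⟩

lemma exists_isLoopErasure_disjoint_Ioo (hf : Continuous f) :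
    ∃ K, IsLoopErasure f K ∧ ∀ u ∈ K, ∀ v ∈ K, f u = f v → Disjoint K (Ioo u v) := by
  obtain ⟨K, -, hK⟩ := zorn_superset_nonempty {K | IsLoopErasure f K}
    (fun 𝒦 h𝒦 hchain hne => ⟨⋂₀ 𝒦, .sInter hf h𝒦 hchain hne, fun _ => sInter_subset_of_mem⟩)
    univ (isLoopErasure_univ f)
  exact ⟨K, hK.prop, fun u hu v hv huv =>
    (subset_sdiff.1 (hK.2 (hK.prop.diff_Ioo hu hv huv) sdiff_subset)).2⟩

/-- The map `g` is obtained from `f` by collapsing the intervals cut out by a minimal loop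
erasure. -/
lemma exists_continuousMap_ordConnected_fibers (f : C(α, X)) :
    ∃ g : C(α, X), g ⊥ = f ⊥ ∧ g ⊤ = f ⊤ ∧ range g ⊆ range f ∧
      ∀ x, (g ⁻¹' {x}).OrdConnected := by
  obtain ⟨K, hK, hKmin⟩ := exists_isLoopErasure_disjoint_Ioo f.continuous
  let C : Set (α × α × α) :=
    {p | p.1 ∈ Icc p.2.1 p.2.2 ∧ p.2.1 ∈ K ∧ p.2.2 ∈ K ∧ f p.2.1 = f p.2.2}
  have hC : IsClosed C :=
    ((isClosed_le (by fun_prop) (by fun_prop)).inter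
      (isClosed_le (by fun_prop) (by fun_prop))).inter ((hK.isClosed.preimage (by fun_prop)).inter
        ((hK.isClosed.preimage (by fun_prop)).inter (isClosed_eq (by fun_prop) (by fun_prop))))
  have : CompactSpace C := isCompact_iff_compactSpace.1 hC.isCompact
  have hcover (t : α) : ∃ c : C, c.1.1 = t :=
    have ⟨u, hu, v, hv, huv⟩ := hK.exists_eq ⊥ hK.bot_mem ⊤ hK.top_mem t ⟨bot_le, le_top⟩
    ⟨⟨(t, u, v), ⟨hu.2.2, hv.2.1⟩, hu.1, hv.1, huv⟩, rfl⟩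
  let base : C(C, α) := ⟨fun c => c.1.1, by fun_prop⟩
  have hquot : IsQuotientMap base := .of_surjective_continuous hcover base.continuous
  let value : C(C, X) := ⟨fun c => f c.1.2.1, by fun_prop⟩
  have hvalue : Function.FactorsThrough value base := fun c c' (hcc' : c.1.1 = c'.1.1) =>
    apply_eq_of_disjoint_Ioo hKmin c.2.2.1 c.2.2.2.1 c.2.2.2.2 c.2.1 c'.2.2.1 c'.2.2.2.1
      c'.2.2.2.2 (hcc'.symm ▸ c'.2.1)
  let g : C(α, X) := hquot.lift value hvalue
  have hg (c : C) : g c.1.1 = f c.1.2.1 := congr($(hquot.lift_comp value hvalue) c)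
  refine ⟨g, ?_, ?_, ?_, ?_⟩
  · exact hg ⟨(⊥, ⊥, ⊥), ⟨le_rfl, le_rfl⟩, hK.bot_mem, hK.bot_mem, rfl⟩
  · exact hg ⟨(⊤, ⊤, ⊤), ⟨le_rfl, le_rfl⟩, hK.top_mem, hK.top_mem, rfl⟩
  · rintro _ ⟨t, rfl⟩
    obtain ⟨c, rfl⟩ := hcover t
    exact ⟨_, (hg c).symm⟩
  · refine fun x => ⟨fun s hs t ht m hm => ?_⟩
    obtain ⟨⟨⟨s, u, v⟩, ⟨hus, hsv⟩, hu, hv, huv⟩, rfl⟩ := hcover s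
    obtain ⟨⟨⟨t, u', v'⟩, ⟨hut', htv'⟩, hu', hv', huv'⟩, rfl⟩ := hcover t
    have hfu : f u = x := (hg ⟨(s, u, v), _⟩).symm.trans hs
    have hfu' : f u' = x := (hg ⟨(t, u', v'), _⟩).symm.trans ht
    exact (hg ⟨(m, u, v'), ⟨hus.trans hm.1, hm.2.trans htv'⟩, hu, hv',
      hfu.trans (hfu'.symm.trans huv')⟩).trans hfu

end LoopErasure

section Arcs

open Topology unitInterval

variable {X : Type*} [MetricSpace X]

/-- Measures how far the values of `g` are, on average, from those taken after `t`. It separates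
exactly the points that `g` does when the fibers of `g` are intervals. -/
noncomputable def tailDist (g : C(I, X)) (t : I) : ℝ :=
  ∫ q in (0 : ℝ)..1, Metric.infDist (g (projIcc 0 1 zero_le_one q)) (g '' Ici t)

lemma continuous_infDist_image_Ici {α : Type*} [Lattice α] [TopologicalSpace α]
    [ContinuousSup α] [CompactSpace α] (g : C(α, X)) :
    Continuous fun p : α × X => Metric.infDist p.2 (g '' Ici p.1) := by
  have himage (t : α) : g '' Ici t = range fun u => g (t ⊔ u) := by
    ext x
    constructor
    · rintro ⟨u, hu, rfl⟩
      exact ⟨u, congrArg g (sup_eq_right.2 hu)⟩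
    · rintro ⟨u, rfl⟩
      exact ⟨t ⊔ u, le_sup_left, rfl⟩
  simp_rw [himage, Metric.infDist_eq_iInf, iInf_range', ← sInf_range, ← image_univ]
  refine isCompact_univ.continuous_sInf (f := fun (p : α × X) u => dist p.2 (g (p.1 ⊔ u))) ?_
  change Continuous fun p : (α × X) × α => dist p.1.2 (g (p.1.1 ⊔ p.2))
  fun_prop

lemma continuous_tailDist_integrand (g : C(I, X)) : Continuous fun p : I × ℝ =>
    Metric.infDist (g (projIcc 0 1 zero_le_one p.2)) (g '' Ici p.1) :=
  (continuous_infDist_image_Ici g).comp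
    (f := fun p : I × ℝ => (p.1, g (projIcc 0 1 zero_le_one p.2))) (by fun_prop)

lemma continuous_tailDist (g : C(I, X)) : Continuous (tailDist g) :=
  intervalIntegral.continuous_parametric_intervalIntegral_of_continuous'
    (continuous_tailDist_integrand g) 0 1

lemma tailDist_eq_of_apply_eq {g : C(I, X)} (hg : ∀ x, (g ⁻¹' {x}).OrdConnected) {s t : I}
    (hst : s ≤ t) (h : g s = g t) : tailDist g s = tailDist g t := by
  have himage : g '' Ici s = g '' Ici t := by
    refine (image_subset_iff.2 fun u hu => ?_).antisymm (image_mono (Ici_subset_Ici.2 hst))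
    rcases le_total t u with htu | hut
    · exact ⟨u, htu, rfl⟩
    · exact ⟨t, self_mem_Ici, ((hg (g t)).out h rfl ⟨hu, hut⟩).symm⟩
  simp only [tailDist, himage]

lemma tailDist_lt_of_apply_ne {g : C(I, X)} (hg : ∀ x, (g ⁻¹' {x}).OrdConnected) {s t : I}
    (hst : s ≤ t) (h : g s ≠ g t) : tailDist g s < tailDist g t := by
  have hcont (t : I) := (continuous_tailDist_integrand g).comp (Continuous.prodMk_right t)
  refine intervalIntegral.integral_lt_integral_of_continuousOn_of_le_of_exists_lt zero_lt_one
    (hcont s).continuousOn (hcont t).continuousOn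
    (fun q _ => Metric.infDist_le_infDist_of_subset (image_mono (Ici_subset_Ici.2 hst))
      (nonempty_Ici.image g)) ⟨s, s.2, ?_⟩
  simp only [projIcc_val]
  rw [Metric.infDist_zero_of_mem (mem_image_of_mem g self_mem_Ici)]
  refine ((isClosed_Ici.isCompact.image g.continuous).isClosed.notMem_iff_infDist_pos
    (nonempty_Ici.image g)).1 ?_
  rintro ⟨u, hu, hus⟩
  exact h ((hg (g s)).out rfl hus ⟨hst, hu⟩).symm

lemma tailDist_eq_iff {g : C(I, X)} (hg : ∀ x, (g ⁻¹' {x}).OrdConnected) {s t : I} :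
    tailDist g s = tailDist g t ↔ g s = g t := by
  wlog hst : s ≤ t generalizing s t
  · rw [eq_comm, this (le_of_not_ge hst), eq_comm]
  exact ⟨fun h => by_contra fun hne => (tailDist_lt_of_apply_ne hg hst hne).ne h,
    tailDist_eq_of_apply_eq hg hst⟩

lemma monotone_tailDist {g : C(I, X)} (hg : ∀ x, (g ⁻¹' {x}).OrdConnected) :
    Monotone (tailDist g) := fun s t hst => by
  by_cases h : g s = g t
  · exact (tailDist_eq_of_apply_eq hg hst h).le
  · exact (tailDist_lt_of_apply_ne hg hst h).le

lemma exists_injective_path_of_ordConnected_fibers {g : C(I, X)}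
    (hg : ∀ x, (g ⁻¹' {x}).OrdConnected) (hne : g 0 ≠ g 1) :
    ∃ a : Path (g 0) (g 1), Function.Injective a ∧ range a ⊆ range g := by
  have hlt : tailDist g 0 < tailDist g 1 := tailDist_lt_of_apply_ne hg zero_le_one hne
  let φ : C(I, Icc (tailDist g 0) (tailDist g 1)) :=
    ⟨fun t => ⟨tailDist g t, monotone_tailDist hg t.2.1, monotone_tailDist hg t.2.2⟩,
      (continuous_tailDist g).subtype_mk _⟩
  have hφ {s t : I} : φ s = φ t ↔ g s = g t := Subtype.ext_iff.trans (tailDist_eq_iff hg)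
  have hsurj : Function.Surjective φ := fun c =>
    have ⟨t, ht⟩ :=
      mem_range_of_exists_le_of_exists_ge (continuous_tailDist g) ⟨0, c.2.1⟩ ⟨1, c.2.2⟩
    ⟨t, Subtype.ext ht⟩
  have hquot : IsQuotientMap φ := .of_surjective_continuous hsurj φ.continuous
  have hfactor : Function.FactorsThrough g φ := fun s t => hφ.1
  have hlift (t : I) : hquot.lift g hfactor (φ t) = g t := congr($(hquot.lift_comp g hfactor) t)
  let e := iccHomeoI _ _ hlt
  have he0 : e.symm 0 = φ 0 := Subtype.ext (by simp [e, φ])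
  have he1 : e.symm 1 = φ 1 := Subtype.ext (by simp [e, φ])
  refine ⟨⟨(hquot.lift g hfactor).comp e.symm, ?_, ?_⟩, fun s t hst => ?_, ?_⟩
  · exact (congrArg _ he0).trans (hlift 0)
  · exact (congrArg _ he1).trans (hlift 1)
  · obtain ⟨s', hs'⟩ := hsurj (e.symm s)
    obtain ⟨t', ht'⟩ := hsurj (e.symm t)
    have : hquot.lift g hfactor (e.symm s) = hquot.lift g hfactor (e.symm t) := hst
    rw [← hs', ← ht', hlift, hlift] at this
    exact e.symm.injective (hs'.symm.trans ((hφ.2 this).trans ht'))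
  · rintro _ ⟨s, rfl⟩
    obtain ⟨s', hs'⟩ := hsurj (e.symm s)
    exact ⟨s', ((congrArg _ hs'.symm).trans (hlift s')).symm⟩

lemma exists_injective_path_range_subset {x y : X} (hne : x ≠ y) (γ : Path x y) :
    ∃ a : Path x y, Function.Injective a ∧ range a ⊆ range γ := by
  obtain ⟨g, h0, h1, hrange, hg⟩ := exists_continuousMap_ordConnected_fibers γ.toContinuousMap
  replace h0 : g 0 = x := h0.trans γ.source
  replace h1 : g 1 = y := h1.trans γ.target
  subst h0 h1
  obtain ⟨a, ha, ha'⟩ := exists_injective_path_of_ordConnected_fibers hg hne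
  exact ⟨a, ha, ha'.trans hrange⟩

lemma exists_injective_path_of_isOpen [LocallyPathConnectedSpace X] {W : Set X} (hW : IsOpen W)
    (hWc : IsConnected W) {x y : X} (hx : x ∈ W) (hy : y ∈ W) (hne : x ≠ y) :
    ∃ a : Path x y, Function.Injective a ∧ range a ⊆ W := by
  obtain ⟨γ, hγ⟩ := (hW.isConnected_iff_isPathConnected.1 hWc).joinedIn x hx y hy
  obtain ⟨a, ha, hrange⟩ := exists_injective_path_range_subset hne γ
  exact ⟨a, ha, hrange.trans (range_subset_iff.2 hγ)⟩

end Arcs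

section NonvanishingApproximation

open Module Metric MeasureTheory

lemma affineSpan_ne_top_of_ncard_le {k V P : Type*} [DivisionRing k] [AddCommGroup V] [Module k V]
    [AddTorsor V P] {s : Set P} (hs : s.Finite) (hcard : s.ncard ≤ finrank k V) :
    affineSpan k s ≠ ⊤ := by
  intro htop
  have := hs.fintype
  have hne : s.Nonempty := AffineSubspace.nonempty_of_affineSpan_eq_top k V P htop
  have hpos := (ncard_pos hs).2 hne
  rw [ncard_eq_toFinset_card', toFinset_card] at hcard hpos
  obtain ⟨n, hn⟩ := Nat.exists_eq_add_one.2 hpos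
  have hdim := finrank_vectorSpan_range_le k ((↑) : s → P) hn
  rw [Subtype.range_coe, ← direction_affineSpan, htop, AffineSubspace.direction_top, finrank_top]
    at hdim
  omega

variable {E : Type*} [NormedAddCommGroup E] [NormedSpace ℝ E] [FiniteDimensional ℝ E]

lemma exists_mem_ball_notMem_convexHull {S : Set (Set E)} (hS : S.Finite)
    (hcard : ∀ s ∈ S, s.Finite ∧ s.ncard ≤ finrank ℝ E) {ε : ℝ} (hε : 0 < ε) :
    ∃ c ∈ ball (0 : E) ε, ∀ s ∈ S, c ∉ convexHull ℝ s := by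
  borelize E
  have hnull : (Measure.addHaar : Measure E) (⋃ s ∈ S, convexHull ℝ s) = 0 :=
    (measure_biUnion_null_iff hS.countable).2 fun s hs => measure_mono_null
      (convexHull_subset_affineSpan s) (Measure.addHaar_affineSubspace _ _
        (affineSpan_ne_top_of_ncard_le (hcard s hs).1 (hcard s hs).2))
  obtain ⟨c, hc, hcS⟩ := not_subset.1 fun h : ball (0 : E) ε ⊆ ⋃ s ∈ S, convexHull ℝ s =>
    (measure_ball_pos (Measure.addHaar : Measure E) 0 hε).ne' (measure_mono_null h hnull)
  exact ⟨c, hc, by simpa only [mem_iUnion, not_exists] using hcS⟩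

variable {X : Type*} [TopologicalSpace X] {n : ℕ}

lemma CovDimLE.exists_cover_dist_lt (hX : CovDimLE X n) {M : Type*} [PseudoMetricSpace M]
    [Nonempty M] {g : X → M} (hg : Continuous g) (hbdd : TotallyBounded (range g)) {ε : ℝ}
    (hε : 0 < ε) :
    ∃ (V : Set (Set X)) (z : Set X → M), V.Finite ∧ (∀ v ∈ V, IsOpen v) ∧ ⋃₀ V = univ ∧
      (∀ v ∈ V, ∀ x ∈ v, dist (z v) (g x) < ε) ∧ ∀ x, {v ∈ V | x ∈ v}.ncard ≤ n + 1 := by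
  obtain ⟨P, hP, hcover⟩ := totallyBounded_iff.1 hbdd ε hε
  obtain ⟨V, hV, hopen, hVcover, hsub, hcard⟩ := hX ((fun p => g ⁻¹' ball p ε) '' P)
    (hP.image _) (forall_mem_image.2 fun p _ => isOpen_ball.preimage hg)
    (by rw [sUnion_image, ← preimage_iUnion₂, preimage_eq_univ_iff]; exact hcover)
  simp only [exists_mem_image] at hsub
  choose! z _ hsub using hsub
  exact ⟨V, z, hV, hopen, hVcover, fun v hv x hx => dist_comm (g x) _ ▸ hsub v hv hx, hcard⟩

/-- On a space of dimension less than that of `E`, maps to `E` can be pushed off the origin: replace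
the map by a combination of few of its values at a time, and translate. -/
lemma CovDimLE.exists_continuousMap_ne_zero [NormalSpace X] (hX : CovDimLE X n)
    (hn : n < finrank ℝ E) (g : C(X, E)) (hg : TotallyBounded (range g)) {ε : ℝ} (hε : 0 < ε) :
    ∃ h : C(X, E), (∀ x, h x ≠ 0) ∧ ∀ x, dist (h x) (g x) < ε := by
  obtain ⟨V, z, hV, hopen, hcover, hdist, hcard⟩ :=
    hX.exists_cover_dist_lt g.continuous hg (half_pos hε)
  have hfinite : (range fun x => z '' {v ∈ V | x ∈ v}).Finite :=
    (hV.image z).finite_subsets.subset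
      (range_subset_iff.2 fun x => image_mono (sep_subset V _))
  obtain ⟨c, hc, hcV⟩ := exists_mem_ball_notMem_convexHull hfinite
    (forall_mem_range.2 fun x => have hVx := hV.subset (sep_subset V (x ∈ ·))
      ⟨hVx.image z, (ncard_image_le hVx).trans ((hcard x).trans hn)⟩) (half_pos hε)
  have := hV.to_subtype
  obtain ⟨f, hf⟩ := PartitionOfUnity.exists_isSubordinate_of_locallyFinite isClosed_univ
    (fun v : V => (v : Set X)) (fun v => hopen v v.2) (locallyFinite_of_finite _)
    (by rw [← sUnion_eq_iUnion, hcover])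
  have hmem {v : V} {x : X} (h : f v x ≠ 0) : x ∈ v.1 := hf v (subset_tsupport _ h)
  let F (x : X) : E := ∑ᶠ v : V, f v x • z v
  have hF : Continuous F := f.continuous_finsum_smul fun _ _ _ => continuousAt_const
  have hF_hull (x : X) : F x ∈ convexHull ℝ (z '' {v ∈ V | x ∈ v}) :=
    f.finsum_smul_mem_convex (g := fun v _ => z v) (mem_univ x) (fun v hv =>
      subset_convexHull ℝ _ (mem_image_of_mem z ⟨v.2, hmem hv⟩)) (convex_convexHull ℝ _)
  have hF_dist (x : X) : dist (F x) (g x) < ε / 2 :=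
    f.finsum_smul_mem_convex (g := fun v _ => z v) (mem_univ x)
      (fun v hv => hdist v v.2 x (hmem hv)) (convex_ball _ _)
  refine ⟨⟨fun x => F x - c, by fun_prop⟩, fun x h => hcV _ ⟨x, rfl⟩ ?_, fun x => ?_⟩
  · exact sub_eq_zero.1 h ▸ hF_hull x
  · have htri := dist_triangle (F x - c) (F x) (g x)
    rw [dist_self_sub_left] at htri
    change dist (F x - c) (g x) < ε
    linarith [mem_ball_zero_iff.1 hc, hF_dist x]

end NonvanishingApproximation

section SimpleLoops

open Topology unitInterval Real

lemma lift_zero_eq_one_of_homotopic_refl {E X : Type*} [TopologicalSpace E] [TopologicalSpace X]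
    {p : E → X} (hp : IsCoveringMap p) {x : X} {γ : Path x x} (hγ : γ.Homotopic (Path.refl x))
    {Γ : C(I, E)} (hΓ : p ∘ Γ = γ) : Γ 0 = Γ 1 := by
  have hx : x = p (Γ 0) := γ.source.symm.trans (congrFun hΓ 0).symm
  have hlift : Γ = hp.liftPath γ (Γ 0) (γ.source.trans hx) :=
    (hp.eq_liftPath_iff' _).2 ⟨hΓ, rfl⟩
  have hconst : .const I (Γ 0) = hp.liftPath (Path.refl x) (Γ 0) hx :=
    (hp.eq_liftPath_iff' _).2 ⟨funext fun _ => hx.symm, rfl⟩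
  calc Γ 0 = hp.liftPath (Path.refl x) (Γ 0) hx 1 := congr($hconst 1)
    _ = hp.liftPath γ (Γ 0) (γ.source.trans hx) 1 :=
      (hp.liftPath_apply_one_eq_of_homotopicRel hγ _ _ _).symm
    _ = Γ 1 := congr($hlift 1).symm

/-- The standard parametrization of the unit circle by the unit interval. -/
noncomputable def unitCircle (t : I) : Circle := Circle.exp (2 * π * t)

lemma continuous_coe_unitCircle : Continuous fun t => (unitCircle t : ℂ) := by
  unfold unitCircle
  fun_prop

lemma unitCircle_zero : unitCircle 0 = 1 := by simp [unitCircle]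

lemma unitCircle_one : unitCircle 1 = 1 := by simp [unitCircle]

variable {X : Type*} [TopologicalSpace X] {x : X} {γ : Path x x}

/-- The argument of `h ∘ γ` increases by `2 * π`. -/
lemma not_homotopic_refl_of_dist_unitCircle_lt_one {h : C(X, ℂ)} (h0 : ∀ y, h y ≠ 0)
    (hγ : ∀ t, dist (h (γ t)) (unitCircle t) < 1) : ¬ γ.Homotopic (Path.refl x) := by
  intro hnull
  have hslit (t : I) : h (γ t) / unitCircle t ∈ Complex.slitPlane := by
    have hlt : ‖(h (γ t) - unitCircle t) / (unitCircle t : ℂ)‖ < 1 := by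
      rw [norm_div, Circle.norm_coe, div_one, ← dist_eq_norm]
      exact hγ t
    have := Complex.mem_slitPlane_of_norm_lt_one hlt
    rwa [sub_div, div_self (Circle.coe_ne_zero _), add_sub_cancel] at this
  let L : C(I, ℂ) := ⟨fun t => (2 * π * t : ℝ) * Complex.I + Complex.log (h (γ t) / unitCircle t),
    .add (by fun_prop) (.clog (.div (by fun_prop) continuous_coe_unitCircle
      fun _ => Circle.coe_ne_zero _) hslit)⟩
  let H : C(X, {z : ℂ // z ≠ 0}) := ⟨fun y => ⟨h y, h0 y⟩, by fun_prop⟩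
  have hL : (fun z : ℂ => (⟨Complex.exp z, Complex.exp_ne_zero z⟩ : {z : ℂ // z ≠ 0})) ∘ L =
      γ.map H.continuous := by
    ext t
    change Complex.exp ((2 * π * t : ℝ) * Complex.I + Complex.log (h (γ t) / unitCircle t)) =
      h (γ t)
    rw [Complex.exp_add, Complex.exp_log (div_ne_zero (h0 _) (Circle.coe_ne_zero _)),
      ← Circle.coe_exp]
    exact mul_div_cancel₀ _ (Circle.coe_ne_zero _)
  have hloop : L 0 = L 1 :=
    lift_zero_eq_one_of_homotopic_refl Complex.isCoveringMap_exp (hnull.map H) hL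
  have hL0 : L 0 = Complex.log (h x) := by
    simp [L, unitCircle_zero]
  have hL1 : L 1 = 2 * π * Complex.I + Complex.log (h x) := by
    simp [L, unitCircle_one]
  rw [hL0, hL1, right_eq_add] at hloop
  exact Complex.two_pi_I_ne_zero hloop

/-- A loop without self-intersections other than its base point. -/
def IsSimpleLoop (γ : Path x x) : Prop :=
  ∀ s t, γ s = γ t → s = t ∨ (s = 0 ∧ t = 1) ∨ (s = 1 ∧ t = 0)

lemma IsSimpleLoop.exists_continuousMap_eq_unitCircle [NormalSpace X] [T2Space X]
    (hγ : IsSimpleLoop γ) :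
    ∃ g : C(X, ℂ), (∀ t, g (γ t) = unitCircle t) ∧ TotallyBounded (range g) := by
  let q : C(I, range γ) := ⟨rangeFactorization γ, γ.continuous.rangeFactorization⟩
  have hq : IsQuotientMap q := .of_surjective_continuous rangeFactorization_surjective q.continuous
  let e : C(I, ℂ) := ⟨fun t => unitCircle t, continuous_coe_unitCircle⟩
  have hfactor : Function.FactorsThrough e q := fun s t hst => by
    rcases hγ s t (congrArg Subtype.val hst) with rfl | ⟨rfl, rfl⟩ | ⟨rfl, rfl⟩
    · rfl
    all_goals simp only [e, ContinuousMap.coe_mk, unitCircle_zero, unitCircle_one]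
  have hlift (t : I) : hq.lift e hfactor (q t) = unitCircle t :=
    congr($(hq.lift_comp e hfactor) t)
  have : TietzeExtension (Metric.closedBall (0 : ℂ) 1) :=
    Metric.instTietzeExtensionClosedBall ℂ 0 one_pos
  obtain ⟨g, hg, hgq⟩ := ContinuousMap.exists_forall_mem_restrict_eq
    (isCompact_range γ.continuous).isClosed (hq.lift e hfactor) (t := Metric.closedBall 0 1)
    (hq.surjective.forall.2 fun t => by
      simp only [hlift, mem_closedBall_zero_iff, Circle.norm_coe, le_rfl])
  exact ⟨g, fun t => (congr($hgq (q t))).trans (hlift t),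
    (isCompact_closedBall (0 : ℂ) 1).totallyBounded.subset (range_subset_iff.2 hg)⟩

lemma IsSimpleLoop.not_homotopic_refl [NormalSpace X] [T2Space X] (hX : CovDimLE X 1)
    (hγ : IsSimpleLoop γ) : ¬ γ.Homotopic (Path.refl x) := by
  obtain ⟨g, hg, hbdd⟩ := hγ.exists_continuousMap_eq_unitCircle
  obtain ⟨h, h0, hdist⟩ := hX.exists_continuousMap_ne_zero
    (Complex.finrank_real_complex ▸ one_lt_two) g hbdd one_pos
  exact not_homotopic_refl_of_dist_unitCircle_lt_one h0 fun t => hg t ▸ hdist (γ t)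

lemma IsSimpleLoop.isReducedPath [NormalSpace X] [T2Space X] (hX : CovDimLE X 1)
    (hγ : IsSimpleLoop γ) : IsReducedPath γ := by
  refine .inr ?_
  rintro ⟨s, t, hst, hs, ht, h, hnull⟩
  rw [γ.extend_apply ⟨hs, hst.le.trans ht⟩, γ.extend_apply ⟨hs.trans hst.le, ht⟩] at h
  obtain ⟨rfl, rfl⟩ : s = 0 ∧ t = 1 := by
    rcases hγ _ _ h with h | ⟨h₀, h₁⟩ | ⟨h₁, -⟩
    · exact absurd (congrArg Subtype.val h) hst.ne
    · exact ⟨congrArg Subtype.val h₀, congrArg Subtype.val h₁⟩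
    · exact absurd (congrArg Subtype.val h₁) (hst.trans_le ht).ne
  have hval (u : I) : γ.truncate 0 1 u = γ u := congr($(γ.truncate_zero_one) u)
  exact IsSimpleLoop.not_homotopic_refl hX
    (fun u v huv => hγ u v ((hval u).symm.trans (huv.trans (hval v)))) hnull

lemma IsSimpleLoop.range_subset_homotopyCore [NormalSpace X] [T2Space X] (hX : CovDimLE X 1)
    (hγ : IsSimpleLoop γ) : range γ ⊆ HomotopyCore X := fun _ hy =>
  mem_iUnion.2 ⟨x, mem_iUnion₂.2 ⟨γ, ⟨hγ.not_homotopic_refl hX, hγ.isReducedPath hX⟩, hy⟩⟩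

end SimpleLoops

section SimpleLoopsFromArcs

open Function unitInterval

variable {X : Type*} [TopologicalSpace X] {x y : X}

lemma injective_subpath {γ : Path x y} (hγ : Injective γ) {s t : I} (hst : s ≠ t) :
    Injective (γ.subpath s t) := fun u v huv => by
  have hcomb : (1 - u : ℝ) * s + u * t = (1 - v) * s + v * t := congrArg Subtype.val (hγ huv)
  have hmul : (u - v : ℝ) * (t - s) = 0 := by linear_combination hcomb
  exact Subtype.ext <| sub_eq_zero.1 <|
    (mul_eq_zero.1 hmul).resolve_right (sub_ne_zero.2 (Subtype.coe_ne_coe.2 hst.symm))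

lemma isSimpleLoop_trans {p : Path x y} {q : Path y x} (hp : Injective p) (hq : Injective q)
    (hpq : range p ∩ range q ⊆ {x, y}) : IsSimpleLoop (p.trans q) := by
  have hmeet {u v : I} (huv : p u = q v) : (u = 0 ∧ v = 1) ∨ (u = 1 ∧ v = 0) := by
    rcases hpq ⟨mem_range_self u, v, huv.symm⟩ with h | h
    · exact .inl ⟨hp (h.trans p.source.symm), hq ((huv.symm.trans h).trans q.target.symm)⟩
    · exact .inr ⟨hp (h.trans p.target.symm), hq ((huv.symm.trans h).trans q.source.symm)⟩
  have hends {s t : I} (hs : (s : ℝ) ≤ 1 / 2) (ht : ¬ (t : ℝ) ≤ 1 / 2)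
      (hst : p.trans q s = p.trans q t) : s = 0 ∧ t = 1 := by
    rw [Path.trans_apply, Path.trans_apply, dif_pos hs, dif_neg ht] at hst
    simp only [Subtype.ext_iff, Icc.coe_zero, Icc.coe_one] at hmeet ⊢
    rcases hmeet hst with ⟨hu, hv⟩ | ⟨-, hv⟩ <;> dsimp only at *
    · constructor <;> linarith
    · linarith
  intro s t hst
  by_cases hs : (s : ℝ) ≤ 1 / 2 <;> by_cases ht : (t : ℝ) ≤ 1 / 2
  · rw [Path.trans_apply, Path.trans_apply, dif_pos hs, dif_pos ht] at hst
    have := congrArg Subtype.val (hp hst)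
    exact .inl (Subtype.ext (by linarith))
  · exact .inr (.inl (hends hs ht hst))
  · exact .inr (.inr (hends ht hs hst.symm).symm)
  · rw [Path.trans_apply, Path.trans_apply, dif_neg hs, dif_neg ht] at hst
    have := congrArg Subtype.val (hq hst)
    exact .inl (Subtype.ext (by linarith))

lemma exists_isSimpleLoop_mem_range [T2Space X] {a b : Path x y} (ha : Injective a)
    (hb : Injective b) {m : I} (hm : a m ∉ range b) :
    ∃ (z : X) (γ : Path z z), IsSimpleLoop γ ∧ a m ∈ range γ := by
  have hclosed : IsClosed (a ⁻¹' range b) :=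
    (isCompact_range b.continuous).isClosed.preimage a.continuous
  obtain ⟨s, ⟨⟨u, hu⟩, hsm⟩, hs⟩ := (hclosed.inter isClosed_Iic).isCompact.exists_isGreatest
    (⟨0, ⟨0, b.source.trans a.source.symm⟩, nonneg'⟩ : (a ⁻¹' range b ∩ Iic m).Nonempty)
  obtain ⟨t, ⟨⟨v, hv⟩, hmt⟩, ht⟩ := (hclosed.inter isClosed_Ici).isCompact.exists_isLeast
    (⟨1, ⟨1, b.target.trans a.target.symm⟩, le_one'⟩ : (a ⁻¹' range b ∩ Ici m).Nonempty)
  have hst : s ≠ t := by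
    rintro rfl
    exact hm ⟨u, hu.trans (congrArg a (le_antisymm hsm hmt))⟩
  have huv : v ≠ u := by
    rintro rfl
    exact hst (ha (hu.symm.trans hv))
  have hle : s ≤ t := le_trans hsm hmt
  let q : Path (a t) (a s) := (b.subpath v u).cast hv.symm hu.symm
  have hq : range q ⊆ range b := by
    rw [Path.cast_coe, Path.range_subpath]
    exact image_subset_range _ _
  refine ⟨a s, (a.subpath s t).trans q, isSimpleLoop_trans (injective_subpath ha hst)
    (injective_subpath hb huv) ?_, ?_⟩
  · rw [a.range_subpath_of_le s t hle]
    rintro _ ⟨⟨r, hr, rfl⟩, hrq⟩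
    rcases le_total r m with hrm | hmr
    · exact .inl (congrArg a ((hs ⟨hq hrq, hrm⟩).antisymm hr.1))
    · exact .inr (congrArg a (hr.2.antisymm (ht ⟨hq hrq, hmr⟩)))
  · rw [Path.trans_range, a.range_subpath_of_le s t hle]
    exact .inl ⟨m, ⟨hsm, hmt⟩, rfl⟩

end SimpleLoopsFromArcs

section BoundaryOfComplementaryComponents

open Function unitInterval

variable {X : Type*} {Y : Set X}

lemma exists_isSimpleLoop_inter_nonempty [MetricSpace X] [LocallyPathConnectedSpace X]
    {p₁ p₂ : X} {a : Path p₁ p₂} (ha : Injective a) (hY : IsPreconnected Y)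
    (haY : Disjoint (range a) Y) {V₁ V₂ : Set X} (hV₁ : IsOpen V₁) (hV₂ : IsOpen V₂)
    (hV₁c : IsPreconnected V₁) (hV₂c : IsPreconnected V₂) (hV : Disjoint V₁ V₂)
    (hp₁ : p₁ ∈ V₁) (hp₂ : p₂ ∈ V₂) (hYV₁ : (Y ∩ V₁).Nonempty) (hYV₂ : (Y ∩ V₂).Nonempty) :
    ∃ (z : X) (γ : Path z z), IsSimpleLoop γ ∧ (range a ∩ range γ).Nonempty := by
  obtain ⟨m, hm⟩ : ∃ m, a m ∉ V₁ ∪ V₂ := by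
    by_contra! hcover
    obtain ⟨_, -, h₁, h₂⟩ := isPreconnected_range a.continuous V₁ V₂ hV₁ hV₂
      (range_subset_iff.2 hcover) ⟨p₁, ⟨0, a.source⟩, hp₁⟩ ⟨p₂, ⟨1, a.target⟩, hp₂⟩
    exact disjoint_left.1 hV h₁ h₂
  obtain ⟨y, hy, hyV₁⟩ := hYV₁
  let O : Set X := (range a)ᶜ ∪ (V₁ ∪ V₂)
  have hO : IsOpen O :=
    (isCompact_range a.continuous).isClosed.isOpen_compl.union (hV₁.union hV₂)
  have hYVO : Y ∪ V₁ ∪ V₂ ⊆ O :=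
    union_assoc Y V₁ V₂ ▸ union_subset_union_left _ (subset_compl_iff_disjoint_left.2 haY)
  have hYVc : IsPreconnected (Y ∪ V₁ ∪ V₂) :=
    (hY.union' ⟨y, hy, hyV₁⟩ hV₁c).union'
      (hYV₂.mono (inter_subset_inter_left _ subset_union_left)) hV₂c
  have hYVU : Y ∪ V₁ ∪ V₂ ⊆ connectedComponentIn O y :=
    hYVc.subset_connectedComponentIn (.inl (.inl hy)) hYVO
  have hne : p₁ ≠ p₂ := fun h => disjoint_left.1 hV hp₁ (h ▸ hp₂)
  obtain ⟨b, hb, hbU⟩ := exists_injective_path_of_isOpen hO.connectedComponentIn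
    (isConnected_connectedComponentIn_iff.2 (hYVO (.inl (.inl hy))))
    (hYVU (.inl (.inr hp₁))) (hYVU (.inr hp₂)) hne
  have hmb : a m ∉ range b := fun h =>
    (connectedComponentIn_subset O y (hbU h)).elim (fun h' => h' (mem_range_self m)) hm
  obtain ⟨z, γ, hγ, hmγ⟩ := exists_isSimpleLoop_mem_range ha hb hmb
  exact ⟨z, γ, hγ, a m, mem_range_self m, hmγ⟩

lemma CovDimLE.subsingleton_inter_closure [MetricSpace X] [LocallyPathConnectedSpace X]
    (hX : CovDimLE X 1) (hY : IsPreconnected Y) (hcore : HomotopyCore X ⊆ Y) {W : Set X}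
    (hW : IsOpen W) (hWc : IsConnected W) (hWY : Disjoint W Y) :
    (Y ∩ closure W).Subsingleton := by
  rintro y₁ ⟨hy₁, hyW₁⟩ y₂ ⟨hy₂, hyW₂⟩
  by_contra hne
  obtain ⟨O₁, O₂, hO₁, hO₂, hyO₁, hyO₂, hO⟩ := t2_separation hne
  obtain ⟨V₁, hVO₁, hV₁, hyV₁, hV₁c⟩ :=
    locallyConnectedSpace_iff_subsets_isOpen_isConnected.1 inferInstance y₁ O₁ (hO₁.mem_nhds hyO₁)
  obtain ⟨V₂, hVO₂, hV₂, hyV₂, hV₂c⟩ :=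
    locallyConnectedSpace_iff_subsets_isOpen_isConnected.1 inferInstance y₂ O₂ (hO₂.mem_nhds hyO₂)
  have hV : Disjoint V₁ V₂ := hO.mono hVO₁ hVO₂
  obtain ⟨p₁, hpV₁, hpW₁⟩ := mem_closure_iff.1 hyW₁ V₁ hV₁ hyV₁
  obtain ⟨p₂, hpV₂, hpW₂⟩ := mem_closure_iff.1 hyW₂ V₂ hV₂ hyV₂
  have hpne : p₁ ≠ p₂ := fun h => disjoint_left.1 hV hpV₁ (h ▸ hpV₂)
  obtain ⟨a, ha, haW⟩ := exists_injective_path_of_isOpen hW hWc hpW₁ hpW₂ hpne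
  obtain ⟨z, γ, hγ, w, hwa, hwγ⟩ := exists_isSimpleLoop_inter_nonempty ha hY
    (hWY.mono_left haW) hV₁ hV₂ hV₁c.isPreconnected hV₂c.isPreconnected hV hpV₁ hpV₂
    ⟨y₁, hy₁, hyV₁⟩ ⟨y₂, hy₂, hyV₂⟩
  exact disjoint_left.1 hWY (haW hwa) (hcore (hγ.range_subset_homotopyCore hX hwγ))

end BoundaryOfComplementaryComponents

section FirstPointRetraction

variable {X : Type*} [TopologicalSpace X] [LocallyConnectedSpace X] {Y : Set X} {x : X}

lemma exists_mem_inter_closure_connectedComponentIn (hY : IsClosed Y) (hx : x ∉ Y) {V : Set X}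
    (hV : IsPreconnected V) (hxV : x ∈ V) (hVY : (V ∩ Y).Nonempty) :
    ∃ z ∈ V, z ∈ Y ∩ closure (connectedComponentIn Yᶜ x) := by
  by_contra! hdisj
  let W := connectedComponentIn Yᶜ x
  have hxW : x ∈ W := mem_connectedComponentIn hx
  have hclosure {z : X} (hz : z ∈ closure W) (hzY : z ∉ Y) : z ∈ W := by
    have hpre : IsPreconnected (insert z W) :=
      isPreconnected_connectedComponentIn.subset_closure (subset_insert _ _)
        (insert_subset hz subset_closure)
    exact hpre.subset_connectedComponentIn (mem_insert_of_mem _ hxW)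
      (insert_subset hzY (connectedComponentIn_subset _ _)) (mem_insert _ _)
  have hcover : V ⊆ W ∪ (closure W)ᶜ := fun z hzV => by
    by_cases hz : z ∈ closure W
    · exact .inl (hclosure hz fun hzY => hdisj z hzV ⟨hzY, hz⟩)
    · exact .inr hz
  obtain ⟨y, hyV, hyY⟩ := hVY
  obtain ⟨z, -, hzW, hz⟩ := hV W (closure W)ᶜ hY.isOpen_compl.connectedComponentIn
    isClosed_closure.isOpen_compl hcover ⟨x, hxV, hxW⟩ ⟨y, hyV, fun hy => hdisj y hyV ⟨hyY, hy⟩⟩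
  exact hz (subset_closure hzW)

lemma continuous_of_mem_of_isPreconnected {r : X → X} (hY : IsClosed Y)
    (hr : ∀ x ∈ Y, r x = x)
    (hconst : ∀ x ∉ Y, ∀ z ∈ connectedComponentIn Yᶜ x, r z = r x)
    (hmem : ∀ (x : X) (V : Set X), IsPreconnected V → x ∈ V → (V ∩ Y).Nonempty → r x ∈ V) :
    Continuous r := by
  refine continuous_iff_continuousAt.2 fun x => ?_
  by_cases hx : x ∈ Y
  · intro O hO
    rw [hr x hx] at hO
    obtain ⟨V, hVO, hV, hxV, hVc⟩ :=
      locallyConnectedSpace_iff_subsets_isOpen_isConnected.1 inferInstance x O hO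
    exact Filter.mem_map.2 <| Filter.mem_of_superset (hV.mem_nhds hxV) fun z hz =>
      hVO (hmem z V hVc.isPreconnected hz ⟨x, hxV, hx⟩)
  · refine (continuousAt_const (y := r x)).congr ?_
    filter_upwards [hY.isOpen_compl.connectedComponentIn.mem_nhds (mem_connectedComponentIn hx)]
      with z hz
    exact (hconst x hx z hz).symm

theorem exists_retraction_of_subsingleton_inter_closure [PreconnectedSpace X] (hY : IsClosed Y)
    (hne : Y.Nonempty)
    (hsub : ∀ x ∉ Y, (Y ∩ closure (connectedComponentIn Yᶜ x)).Subsingleton) :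
    ∃ r : C(X, X), range r ⊆ Y ∧ (∀ x ∈ Y, r x = x) ∧
      ∀ (x : X) (V : Set X), IsPreconnected V → x ∈ V → (V ∩ Y).Nonempty → r x ∈ V := by
  have hex (x : X) : ∃ z ∈ Y, (x ∈ Y → z = x) ∧
      (x ∉ Y → z ∈ closure (connectedComponentIn Yᶜ x)) := by
    by_cases hx : x ∈ Y
    · exact ⟨x, hx, fun _ => rfl, fun h => absurd hx h⟩
    · obtain ⟨z, -, hzY, hz⟩ := exists_mem_inter_closure_connectedComponentIn hY hx
        isPreconnected_univ (mem_univ x) (by rwa [univ_inter])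
      exact ⟨z, hzY, fun h => absurd h hx, fun _ => hz⟩
  choose r hrY hr hrW using hex
  have hconst : ∀ x ∉ Y, ∀ z ∈ connectedComponentIn Yᶜ x, r z = r x := fun x hx z hz =>
    hsub x hx ⟨hrY z, connectedComponentIn_eq hz ▸ hrW z (connectedComponentIn_subset _ _ hz)⟩
      ⟨hrY x, hrW x hx⟩
  have hmem (x : X) (V : Set X) (hV : IsPreconnected V) (hxV : x ∈ V)
      (hVY : (V ∩ Y).Nonempty) : r x ∈ V := by
    by_cases hx : x ∈ Y
    · rwa [hr x hx]
    · obtain ⟨z, hzV, hz⟩ := exists_mem_inter_closure_connectedComponentIn hY hx hV hxV hVY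
      rwa [hsub x hx ⟨hrY x, hrW x hx⟩ hz]
  exact ⟨⟨r, continuous_of_mem_of_isPreconnected hY hr hconst hmem⟩, range_subset_iff.2 hrY, hr,
    hmem⟩

end FirstPointRetraction

theorem stmt_8_general {X : Type*} [MetricSpace X] [PreconnectedSpace X]
    [LocallyPathConnectedSpace X] (hdim : CovDimLE X 1) {Y : Set X} (hY : IsClosed Y)
    (hYconn : IsConnected Y) (hcore : HomotopyCore X ⊆ Y) :
    ∃ r : C(X, X), range r ⊆ Y ∧ (∀ x ∈ Y, r x = x) ∧
      ∀ (x : X) (V : Set X), IsPreconnected V → x ∈ V → (V ∩ Y).Nonempty → r x ∈ V :=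
  exists_retraction_of_subsingleton_inter_closure hY hYconn.nonempty fun x hx =>
    hdim.subsingleton_inter_closure hYconn.isPreconnected hcore
      hY.isOpen_compl.connectedComponentIn (isConnected_connectedComponentIn_iff.2 hx)
      (subset_compl_iff_disjoint_right.1 (connectedComponentIn_subset Yᶜ x))

/-- The first point map is a continuous retraction of `X` onto `Y`. -/
theorem stmt_8 {X : Type} [MetricSpace X] [CompactSpace X] [ConnectedSpace X]
    [LocallyConnectedSpace X] (hdim : CovDimLE X 1)
    (Y : Set X) (hYcpt : IsCompact Y) (hYconn : IsConnected Y)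
    (hcore : HomotopyCore X ⊆ Y) :
    ∃ r : C(X, X), Set.range r ⊆ Y ∧ (∀ x ∈ Y, r x = x) ∧
      ∀ x, x ∉ Y → ∀ y ∈ Y, ∀ γ : Path x y,
        Function.Injective (fun t => γ t) → r x ∈ Set.range fun t => γ t := by
  have : LocallyPathConnectedSpace X := locallyPathConnectedSpace_of_completeSpace
  obtain ⟨r, hrY, hr, hmem⟩ := stmt_8_general hdim hYcpt.isClosed hYconn hcore
  exact ⟨r, hrY, hr, fun x _ y hy γ _ => hmem x _ (isPreconnected_range γ.continuous)
    ⟨0, γ.source⟩ ⟨y, ⟨1, γ.target⟩, hy⟩⟩
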